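/- Let δ21 = X² + 2X + 2 and δ41 = X⁴ + 2X³ + 2X² + 4X + 4. Then for every odd n ≥ 3: F_2(n,0,0,0) = 2^{n−3} − (1/8)·(2ρ_n(δ21) + ρ_n(δ41)); F_2(n,0,1,0) = F_2(n,0,0,1) = 2^{n−3} + (1/8)·ρ_n(δ41); F_2(n,0,1,1) = 2^{n−3} − (1/8)·(−2ρ_n(δ21) + ρ_n(δ41)); and, writing (c,d) for the pair with F_2(n,t1,t2,t3) = 2^{n−3} − (1/8)·(c·ρ_n(δ21) + d·ρ_n(δ41)): F_2(n,1,0,0) has (c,d) = (2,1) if n ≡ 1 (mod 4) and (0,−1) if n ≡ 3 (mod 4); F_2(n,1,1,0) has (c,d) = (−2,1) if n ≡ 1 (mod 4) and (0,−1) if n ≡ 3 (mod 4); F_2(n,1,0,1) has (c,d) = (0,−1) if n ≡ 1 (mod 4) and (−2,1) if n ≡ 3 (mod 4); F_2(n,1,1,1) has (c,d) = (0,−1) if n ≡ 1 (mod 4) and (2,1) if n ≡ 3 (mod 4). All equalities are between complex numbers, the counts being viewed in ℂ. -/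

import Mathlib

open Polynomial

/-- For a finite field `K` with `2^n` elements, the `k`-th trace function
`T_k(a) = Σ_S ∏_{i ∈ S} a^(2^i)`, the sum over all `k`-element subsets `S` of `{0,…,n-1}`. -/
noncomputable def traceFn (q n k : ℕ) {K : Type*} [CommRing K] (a : K) : K :=
  ∑ S ∈ Finset.powersetCard k (Finset.range n), ∏ i ∈ S, a ^ (q ^ i)

/-- `ρ_n(γ)`: the sum of the `n`-th powers of the complex roots of `γ ∈ ℤ[X]`,
counted with multiplicity. -/
noncomputable def rho (n : ℕ) (γ : Polynomial ℤ) : ℂ :=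
  ((γ.map (Int.castRingHom ℂ)).roots.map (· ^ n)).sum

/-- `F_2(n,t₁,t₂,t₃)`: the number of `a` in the field `K` (of `2^n` elements)
with `T_k(a) = t_k` for `k = 1,2,3`. -/
noncomputable def cnt3 (n : ℕ) (K : Type) [Field K] [Fintype K] (t1 t2 t3 : K) : ℕ :=
  Nat.card {a : K // traceFn 2 n 1 a = t1 ∧ traceFn 2 n 2 a = t2 ∧ traceFn 2 n 3 a = t3}

noncomputable def d21 : Polynomial ℤ := X ^ 2 + 2 * X + 2
noncomputable def d41 : Polynomial ℤ := X ^ 4 + 2 * X ^ 3 + 2 * X ^ 2 + 4 * X + 4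


/-- monic polynomials of degree `d` over `F_2`. -/
noncomputable def monicsOf : ℕ → Finset (ZMod 2)[X]
  | 0 => {1}
  | d + 1 => (monicsOf d ×ˢ (Finset.univ : Finset (ZMod 2))).image (fun x => x.1 * X + C x.2)

lemma mem_monicsOf (d : ℕ) (f : (ZMod 2)[X]) :
    f ∈ monicsOf d ↔ f.Monic ∧ f.natDegree = d := by
  induction d generalizing f with
  | zero =>
    simp only [monicsOf, Finset.mem_singleton]
    constructor
    · rintro rfl; simp
    · rintro ⟨h1, h2⟩; exact h1.natDegree_eq_zero.mp h2
  | succ d ih =>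
    simp only [monicsOf, Finset.mem_image, Finset.mem_product, Finset.mem_univ, and_true,
      Prod.exists]
    constructor
    · rintro ⟨g, a, hg, rfl⟩
      obtain ⟨h1, h2⟩ := (ih g).1 hg
      have h3 : (g * X).natDegree = d + 1 := by rw [natDegree_mul_X h1.ne_zero, h2]
      have h4 : (g * X).Monic := h1.mul monic_X
      refine ⟨h4.add_of_left ?_, ?_⟩
      · refine lt_of_le_of_lt degree_C_le ?_
        rw [degree_eq_natDegree h4.ne_zero, h3]
        exact_mod_cast Nat.succ_pos d
      · rw [natDegree_add_C, h3]
    · rintro ⟨h1, h2⟩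
      have h5 : f.divX.natDegree = d := by rw [natDegree_divX_eq_natDegree_tsub_one, h2]; rfl
      refine ⟨f.divX, f.coeff 0, (ih _).2 ⟨?_, h5⟩, divX_mul_X_add f⟩
      rw [Monic, leadingCoeff, h5, coeff_divX, ← h2]
      exact h1

lemma sum_monicsOf_succ (d : ℕ) (F : (ZMod 2)[X] → ℂ) :
    ∑ f ∈ monicsOf (d + 1), F f = ∑ f ∈ monicsOf d, (F (f * X + C 0) + F (f * X + C 1)) := by
  rw [monicsOf, Finset.sum_image, Finset.sum_product]
  · refine Finset.sum_congr rfl fun f _ => ?_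
    exact Fin.sum_univ_two _
  · rintro ⟨f, a⟩ - ⟨g, b⟩ - h
    simp only at h
    have h0 : a = b := by simpa using congrArg (fun p => coeff p 0) h
    subst h0
    simp only [add_left_inj] at h
    rw [mul_right_cancel₀ X_ne_zero h]

/-- first three coefficients below the leading one -/
noncomputable def top3 (f : (ZMod 2)[X]) : ZMod 2 × ZMod 2 × ZMod 2 :=
  (f.reverse.coeff 1, f.reverse.coeff 2, f.reverse.coeff 3)

/-- exponent of order four -/
def ex1 (a : ZMod 2 × ZMod 2 × ZMod 2) : ℕ := a.1.val + 2 * a.2.1.val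

/-- exponent of order two -/
def ex2 (a : ZMod 2 × ZMod 2 × ZMod 2) : ℕ := (a.2.2 + a.1 * a.2.1).val

/-- multiplication of truncated power series -/
def mul3 (a b : ZMod 2 × ZMod 2 × ZMod 2) : ZMod 2 × ZMod 2 × ZMod 2 :=
  (a.1 + b.1, a.2.1 + a.1 * b.1 + b.2.1, a.2.2 + a.2.1 * b.1 + a.1 * b.2.1 + b.2.2)

/-- the character -/
noncomputable def psi (z s : ℂ) (a : ZMod 2 × ZMod 2 × ZMod 2) : ℂ := z ^ ex1 a * s ^ ex2 a

/-- the character on polynomials -/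
noncomputable def chi (z s : ℂ) (f : (ZMod 2)[X]) : ℂ := psi z s (top3 f)

lemma ex1_mul : ∀ a b, ex1 (mul3 a b) % 4 = (ex1 a + ex1 b) % 4 := by decide
lemma ex2_mul : ∀ a b, ex2 (mul3 a b) % 2 = (ex2 a + ex2 b) % 2 := by decide

lemma psi_mul (z s : ℂ) (hz : z ^ 4 = 1) (hs : s ^ 2 = 1) (a b) :
    psi z s (mul3 a b) = psi z s a * psi z s b := by
  unfold psi
  rw [pow_eq_pow_mod (ex1 (mul3 a b)) hz, ex1_mul, ← pow_eq_pow_mod _ hz,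
    pow_eq_pow_mod (ex2 (mul3 a b)) hs, ex2_mul, ← pow_eq_pow_mod _ hs]
  ring

lemma top3_mul (f g : (ZMod 2)[X]) (hf : f.Monic) (hg : g.Monic) :
    top3 (f * g) = mul3 (top3 f) (top3 g) := by
  have h0 : f.reverse.coeff 0 = 1 := by rw [coeff_zero_reverse]; exact hf
  have h0' : g.reverse.coeff 0 = 1 := by rw [coeff_zero_reverse]; exact hg
  simp only [top3, mul3, reverse_mul_of_domain, coeff_mul]
  simp [Finset.Nat.antidiagonal_succ, h0, h0']
  refine ⟨?_, ?_, ?_⟩ <;> ring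

lemma chi_mul (z s : ℂ) (hz : z ^ 4 = 1) (hs : s ^ 2 = 1) (f g : (ZMod 2)[X])
    (hf : f.Monic) (hg : g.Monic) : chi z s (f * g) = chi z s f * chi z s g := by
  rw [chi, top3_mul f g hf hg, psi_mul z s hz hs]; rfl

lemma chi_one (z s : ℂ) : chi z s 1 = 1 := by
  have : top3 (1 : (ZMod 2)[X]) = 0 := by
    have : (1 : (ZMod 2)[X]).reverse = 1 := by rw [← C_1, reverse_C]
    simp [top3, this, coeff_one]
  rw [chi, this]; simp [psi, ex1, ex2]

/-- character sums over monic polynomials -/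
noncomputable def csum (χ : (ZMod 2)[X] → ℂ) (n : ℕ) : ℂ := ∑ f ∈ monicsOf n, χ f

lemma revcoeff_step (f : (ZMod 2)[X]) (d i : ℕ) (a : ZMod 2) (hf : f ∈ monicsOf d) (hi : i ≤ d) :
    (f * X + C a).reverse.coeff i = f.reverse.coeff i := by
  have h1 : (f * X + C a) ∈ monicsOf (d + 1) := by
    simp only [monicsOf, Finset.mem_image, Finset.mem_product, Finset.mem_univ, and_true,
      Prod.exists]
    exact ⟨f, a, hf, rfl⟩
  rw [mem_monicsOf] at h1 hf
  rw [coeff_reverse, coeff_reverse, h1.2, hf.2, revAt_le hi, revAt_le (by omega)]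
  rw [Nat.succ_sub hi, coeff_add, coeff_mul_X, coeff_C_succ, add_zero]

lemma top3_step (f : (ZMod 2)[X]) (d : ℕ) (a : ZMod 2) (hf : f ∈ monicsOf d) (hd : 3 ≤ d) :
    top3 (f * X + C a) = top3 f := by
  unfold top3
  rw [revcoeff_step f d _ a hf (by omega), revcoeff_step f d _ a hf (by omega),
    revcoeff_step f d _ a hf (by omega)]

lemma csum_step (z s : ℂ) (d : ℕ) (hd : 3 ≤ d) :
    csum (chi z s) (d + 1) = 2 * csum (chi z s) d := by
  rw [csum, sum_monicsOf_succ, csum, Finset.mul_sum]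
  refine Finset.sum_congr rfl fun f hf => ?_
  rw [chi, chi, top3_step f d _ hf hd, top3_step f d _ hf hd, chi]; ring

lemma mem_step (f : (ZMod 2)[X]) (d : ℕ) (a : ZMod 2) (hf : f ∈ monicsOf d) :
    (f * X + C a) ∈ monicsOf (d + 1) := by
  simp only [monicsOf, Finset.mem_image, Finset.mem_product, Finset.mem_univ, and_true,
    Prod.exists]
  exact ⟨f, a, hf, rfl⟩

lemma revcoeff_last (f : (ZMod 2)[X]) (d : ℕ) (a : ZMod 2) (hf : f ∈ monicsOf d) :
    (f * X + C a).reverse.coeff (d + 1) = a := by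
  have h1 := mem_step f d a hf
  rw [mem_monicsOf] at h1
  rw [coeff_reverse, h1.2, revAt_le le_rfl]
  simp

lemma revcoeff_gt (f : (ZMod 2)[X]) (d i : ℕ) (hf : f ∈ monicsOf d) (hi : d < i) :
    f.reverse.coeff i = 0 := by
  rw [mem_monicsOf] at hf
  apply coeff_eq_zero_of_natDegree_lt
  exact lt_of_le_of_lt (reverse_natDegree_le f) (hf.2 ▸ hi)

lemma one_mem : (1 : (ZMod 2)[X]) ∈ monicsOf 0 := by simp [monicsOf]

lemma rev_lin (a : ZMod 2) : top3 (1 * X + C a) = (a, 0, 0) := by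
  have h1 := mem_step 1 0 a one_mem
  rw [top3, revcoeff_gt _ _ 2 h1 (by omega), revcoeff_gt _ _ 3 h1 (by omega),
    revcoeff_last 1 0 a one_mem]

lemma rev_quad (a b : ZMod 2) : top3 ((1 * X + C a) * X + C b) = (a, b, 0) := by
  have h1 := mem_step 1 0 a one_mem
  have h2 := mem_step _ _ b h1
  rw [top3, revcoeff_step _ _ 1 b h1 (by omega), revcoeff_gt _ _ 3 h2 (by omega),
    revcoeff_last _ 1 b h1, revcoeff_last 1 0 a one_mem]

lemma rev_cub (a b c : ZMod 2) : top3 (((1 * X + C a) * X + C b) * X + C c) = (a, b, c) := by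
  have h1 := mem_step 1 0 a one_mem
  have h2 := mem_step _ _ b h1
  rw [top3, revcoeff_step _ _ 1 c h2 (by omega), revcoeff_step _ _ 2 c h2 (by omega),
    revcoeff_step _ _ 1 b h1 (by omega), revcoeff_last _ 2 c h2,
    revcoeff_last _ 1 b h1, revcoeff_last 1 0 a one_mem]

lemma csum_zero (z s : ℂ) : csum (chi z s) 0 = 1 := by
  simp [csum, monicsOf, chi_one]

lemma csum_one (z s : ℂ) : csum (chi z s) 1 = 1 + z := by
  rw [csum, sum_monicsOf_succ, monicsOf, Finset.sum_singleton]
  simp only [chi, rev_lin, psi, ex1, ex2]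
  simp [ZMod.val_one]

lemma csum_two (z s : ℂ) : csum (chi z s) 2 = 1 + z + z ^ 2 + z ^ 3 * s := by
  rw [csum, sum_monicsOf_succ, sum_monicsOf_succ, monicsOf, Finset.sum_singleton]
  simp only [chi, rev_quad, psi, ex1, ex2]
  simp [ZMod.val_one]
  ring

lemma csum_three (z s : ℂ) : csum (chi z s) 3 = (1 + z + z ^ 2 + z ^ 3) * (1 + s) := by
  rw [csum, sum_monicsOf_succ, sum_monicsOf_succ, sum_monicsOf_succ, monicsOf,
    Finset.sum_singleton]
  simp only [chi, rev_cub, psi, ex1, ex2]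
  have : (1 + 1 : ZMod 2) = 0 := by decide
  simp [ZMod.val_one, this]
  ring

lemma csum_big (z s : ℂ) (h : (1 + z + z ^ 2 + z ^ 3) * (1 + s) = 0) (d : ℕ) :
    csum (chi z s) (d + 3) = 0 := by
  induction d with
  | zero => rw [csum_three, h]
  | succ d ih => rw [show d + 1 + 3 = (d + 3) + 1 by ring, csum_step _ _ _ (by omega), ih, mul_zero]


open Classical in
/-- monic irreducibles of degree `d` -/
noncomputable def irrOf (d : ℕ) : Finset (ZMod 2)[X] := (monicsOf d).filter Irreducible

lemma mem_irrOf (d : ℕ) (f : (ZMod 2)[X]) :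
    f ∈ irrOf d ↔ (f.Monic ∧ f.natDegree = d) ∧ Irreducible f := by
  classical
  rw [irrOf, Finset.mem_filter, mem_monicsOf]

/-- the power sums attached to a character -/
noncomputable def psum (χ : (ZMod 2)[X] → ℂ) (k : ℕ) : ℂ :=
  ∑ x ∈ k.divisorsAntidiagonal, ∑ P ∈ irrOf x.1, (x.1 : ℂ) * χ P ^ x.2

lemma pow_dvd_iff_count (f P : (ZMod 2)[X]) (hf : f ≠ 0) (hP : P.Monic) (hi : Irreducible P)
    (j : ℕ) : P ^ j ∣ f ↔ j ≤ (UniqueFactorizationMonoid.normalizedFactors f).count P := by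
  rw [UniqueFactorizationMonoid.dvd_iff_normalizedFactors_le_normalizedFactors
    (pow_ne_zero _ hi.ne_zero) hf, UniqueFactorizationMonoid.normalizedFactors_of_irreducible_pow hi,
    hP.normalize_eq_self, Multiset.le_count_iff_replicate_le]

open Classical in
lemma degree_decomp (n : ℕ) (f : (ZMod 2)[X]) (hf : f ∈ monicsOf n) :
    (n : ℂ) = ∑ d ∈ Finset.Icc 1 n, ∑ j ∈ Finset.Icc 1 n, ∑ P ∈ irrOf d,
      if P ^ j ∣ f then (d : ℂ) else 0 := by
  rw [mem_monicsOf] at hf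
  obtain ⟨hm, hn⟩ := hf
  have hf0 := hm.ne_zero
  set s := UniqueFactorizationMonoid.normalizedFactors f with hs
  have hmon : ∀ P ∈ s, P.Monic ∧ Irreducible P := by
    intro P hP
    have h1 := UniqueFactorizationMonoid.irreducible_of_normalized_factor P hP
    refine ⟨?_, h1⟩
    have h2 := UniqueFactorizationMonoid.normalize_normalized_factor P hP
    rw [← h2]; exact monic_normalize h1.ne_zero
  have hprod : s.prod = f := by
    rw [hs, UniqueFactorizationMonoid.prod_normalizedFactors_eq hf0, hm.normalize_eq_self]
  have hdeg : n = (s.map natDegree).sum := by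
    rw [← natDegree_multiset_prod_of_monic, hprod, hn]
    exact fun P hP => (hmon P hP).1
  have hle : ∀ P ∈ s, P.natDegree ∈ Finset.Icc 1 n := by
    intro P hP
    rw [Finset.mem_Icc]
    refine ⟨(hmon P hP).2.natDegree_pos, ?_⟩
    rw [← hn]
    exact natDegree_le_of_dvd (UniqueFactorizationMonoid.dvd_of_mem_normalizedFactors hP) hf0
  have hcard : s.card ≤ n := by
    rw [hdeg]
    have := Multiset.card_nsmul_le_sum (s := s.map natDegree) (a := 1) (by
      intro x hx
      obtain ⟨P, hP, rfl⟩ := Multiset.mem_map.1 hx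
      exact (Finset.mem_Icc.1 (hle P hP)).1)
    simpa using this
  have hinner : ∀ d ∈ Finset.Icc 1 n, ∀ P ∈ irrOf d,
      ∑ j ∈ Finset.Icc 1 n, (if P ^ j ∣ f then (d : ℂ) else 0) = (s.count P : ℂ) * d := by
    intro d _ P hP
    rw [mem_irrOf] at hP
    rw [← Finset.sum_filter, Finset.sum_const, nsmul_eq_mul]
    congr 2
    have : Finset.filter (fun j => P ^ j ∣ f) (Finset.Icc 1 n) = Finset.Icc 1 (s.count P) := by
      ext j
      rw [Finset.mem_filter, pow_dvd_iff_count f P hf0 hP.1.1 hP.2, Finset.mem_Icc, Finset.mem_Icc]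
      have := (Multiset.count_le_card P s).trans hcard
      constructor
      · rintro ⟨⟨a, b⟩, c⟩; exact ⟨a, c⟩
      · rintro ⟨a, c⟩; exact ⟨⟨a, c.trans this⟩, c⟩
    rw [this]; simp
  have hR : ∑ d ∈ Finset.Icc 1 n, ∑ j ∈ Finset.Icc 1 n, ∑ P ∈ irrOf d,
      (if P ^ j ∣ f then (d : ℂ) else 0) =
      ∑ d ∈ Finset.Icc 1 n, ∑ P ∈ irrOf d, (s.count P : ℂ) * P.natDegree := by
    refine Finset.sum_congr rfl fun d hd => ?_
    rw [Finset.sum_comm]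
    refine Finset.sum_congr rfl fun P hP => ?_
    rw [hinner d hd P hP, ((mem_irrOf _ _).1 hP).1.2]
  rw [hR, ← Finset.sum_biUnion]
  · have hsub : s.toFinset ⊆ (Finset.Icc 1 n).biUnion irrOf := by
      intro P hP
      rw [Multiset.mem_toFinset] at hP
      rw [Finset.mem_biUnion]
      exact ⟨_, hle P hP, (mem_irrOf _ _).2 ⟨⟨(hmon P hP).1, rfl⟩, (hmon P hP).2⟩⟩
    rw [← Finset.sum_subset hsub]
    · conv_lhs => rw [hdeg, Finset.sum_multiset_map_count]
      push_cast
      simp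
    · intro P _ hP
      rw [Multiset.mem_toFinset] at hP
      rw [Multiset.count_eq_zero_of_notMem hP]; simp
  · intro a _ b _ hab
    rw [Function.onFun, Finset.disjoint_left]
    intro P h1 h2
    rw [mem_irrOf] at h1 h2
    exact hab (h1.1.2.symm.trans h2.1.2)

open Classical in
lemma sum_multiples (χ : (ZMod 2)[X] → ℂ)
    (hmul : ∀ f g : (ZMod 2)[X], f.Monic → g.Monic → χ (f * g) = χ f * χ g)
    (n m : ℕ) (Q : (ZMod 2)[X]) (hQ : Q ∈ monicsOf m) :
    ∑ f ∈ monicsOf n, (if Q ∣ f then χ f else 0) =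
      if m ≤ n then χ Q * csum χ (n - m) else 0 := by
  rw [mem_monicsOf] at hQ
  split_ifs with h
  · rw [← Finset.sum_filter, csum, Finset.mul_sum]
    symm
    refine Finset.sum_bij (fun g _ => Q * g) ?_ ?_ ?_ ?_
    · intro g hg
      rw [mem_monicsOf] at hg
      rw [Finset.mem_filter, mem_monicsOf]
      refine ⟨⟨hQ.1.mul hg.1, ?_⟩, dvd_mul_right _ _⟩
      rw [hQ.1.natDegree_mul hg.1, hQ.2, hg.2]; omega
    · intro g _ g' _ h
      exact mul_left_cancel₀ hQ.1.ne_zero h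
    · intro f hf
      rw [Finset.mem_filter, mem_monicsOf] at hf
      obtain ⟨⟨h1, h2⟩, g, rfl⟩ := hf
      have hg := hQ.1.of_mul_monic_left h1
      refine ⟨g, ?_, rfl⟩
      rw [mem_monicsOf]
      refine ⟨hg, ?_⟩
      rw [hQ.1.natDegree_mul hg, hQ.2] at h2; omega
    · intro g hg
      rw [mem_monicsOf] at hg
      rw [hmul _ _ hQ.1 hg.1]
  · refine Finset.sum_eq_zero fun f hf => ?_
    rw [mem_monicsOf] at hf
    rw [if_neg]
    intro hd
    have := natDegree_le_of_dvd hd hf.1.ne_zero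
    omega

lemma chi_pow' (χ : (ZMod 2)[X] → ℂ) (h1 : χ 1 = 1)
    (hmul : ∀ f g : (ZMod 2)[X], f.Monic → g.Monic → χ (f * g) = χ f * χ g)
    (P : (ZMod 2)[X]) (hP : P.Monic) (j : ℕ) : χ (P ^ j) = χ P ^ j := by
  induction j with
  | zero => simp [h1]
  | succ j ih => rw [pow_succ, hmul _ _ (hP.pow j) hP, ih, pow_succ]

lemma newton (χ : (ZMod 2)[X] → ℂ) (h1 : χ 1 = 1)
    (hmul : ∀ f g : (ZMod 2)[X], f.Monic → g.Monic → χ (f * g) = χ f * χ g) (n : ℕ) :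
    (n : ℂ) * csum χ n = ∑ k ∈ Finset.Icc 1 n, psum χ k * csum χ (n - k) := by
  classical
  have hL : (n : ℂ) * csum χ n = ∑ d ∈ Finset.Icc 1 n, ∑ j ∈ Finset.Icc 1 n,
      if d * j ≤ n then (∑ P ∈ irrOf d, (d : ℂ) * χ P ^ j) * csum χ (n - d * j) else 0 := by
    calc (n : ℂ) * csum χ n = ∑ f ∈ monicsOf n, ∑ d ∈ Finset.Icc 1 n, ∑ j ∈ Finset.Icc 1 n,
          ∑ P ∈ irrOf d, (d : ℂ) * (if P ^ j ∣ f then χ f else 0) := by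
          rw [csum, Finset.mul_sum]
          refine Finset.sum_congr rfl fun f hf => ?_
          conv_lhs => rw [degree_decomp n f hf]
          simp only [Finset.sum_mul]
          refine Finset.sum_congr rfl fun d _ => Finset.sum_congr rfl fun j _ =>
            Finset.sum_congr rfl fun P _ => ?_
          split_ifs <;> simp
      _ = _ := by
          rw [Finset.sum_comm]
          refine Finset.sum_congr rfl fun d _ => ?_
          rw [Finset.sum_comm]
          refine Finset.sum_congr rfl fun j _ => ?_
          rw [Finset.sum_comm]
          have : ∀ P ∈ irrOf d, ∑ f ∈ monicsOf n, (d : ℂ) * (if P ^ j ∣ f then χ f else 0) =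
              if d * j ≤ n then (d : ℂ) * χ P ^ j * csum χ (n - d * j) else 0 := by
            intro P hP
            rw [mem_irrOf] at hP
            rw [← Finset.mul_sum, sum_multiples χ hmul n (d * j)]
            · rw [chi_pow' χ h1 hmul P hP.1.1]
              split_ifs <;> ring
            · rw [mem_monicsOf]
              refine ⟨hP.1.1.pow j, ?_⟩
              rw [hP.1.1.natDegree_pow, hP.1.2, mul_comm]
          rw [Finset.sum_congr rfl this]
          split_ifs
          · rw [Finset.sum_mul]
          · simp
  rw [hL]
  have hR : ∀ k ∈ Finset.Icc 1 n, psum χ k * csum χ (n - k) =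
      ∑ d ∈ Finset.Icc 1 n, ∑ j ∈ Finset.Icc 1 n, if d * j = k then
        (∑ P ∈ irrOf d, (d : ℂ) * χ P ^ j) * csum χ (n - d * j) else 0 := by
    intro k hk
    rw [Finset.mem_Icc] at hk
    rw [psum, Finset.sum_mul, ← Finset.sum_product', ← Finset.sum_filter]
    have : Finset.filter (fun x : ℕ × ℕ => x.1 * x.2 = k) (Finset.Icc 1 n ×ˢ Finset.Icc 1 n) =
        k.divisorsAntidiagonal := by
      ext ⟨d, j⟩
      simp only [Finset.mem_filter, Finset.mem_product, Finset.mem_Icc,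
        Nat.mem_divisorsAntidiagonal]
      constructor
      · rintro ⟨_, h⟩; exact ⟨h, by omega⟩
      · rintro ⟨h, h0⟩
        have hd : 1 ≤ d := Nat.pos_of_ne_zero (by rintro rfl; simp at h; omega)
        have hj : 1 ≤ j := Nat.pos_of_ne_zero (by rintro rfl; simp at h; omega)
        refine ⟨⟨⟨hd, ?_⟩, hj, ?_⟩, h⟩ <;> nlinarith
    rw [this]
    refine Finset.sum_congr rfl fun x hx => ?_
    rw [(Nat.mem_divisorsAntidiagonal.1 hx).1]
  rw [Finset.sum_congr rfl hR]
  conv_rhs => rw [Finset.sum_comm]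
  refine Finset.sum_congr rfl fun d hd => ?_
  conv_rhs => rw [Finset.sum_comm]
  refine Finset.sum_congr rfl fun j hj => ?_
  rw [Finset.mem_Icc] at hd hj
  rw [Finset.sum_ite_eq]
  have : 1 ≤ d * j := Nat.mul_pos hd.1 hj.1
  simp [Finset.mem_Icc, this]

/-- the explicit formula -/
lemma psum_formula (z s : ℂ) (hz : z ^ 4 = 1) (hs : s ^ 2 = 1)
    (h : (1 + z + z ^ 2 + z ^ 3) * (1 + s) = 0) (α β : ℂ)
    (hab : α + β = -(1 + z)) (hab' : α * β = 1 + z + z ^ 2 + z ^ 3 * s) (n : ℕ) (hn : 1 ≤ n) :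
    psum (chi z s) n = -(α ^ n + β ^ n) := by
  have hN := newton (chi z s) (chi_one z s) (chi_mul z s hz hs)
  have key : ∀ m, psum (chi z s) (m + 1) = -(α ^ (m + 1) + β ^ (m + 1)) ∧
      psum (chi z s) (m + 2) = -(α ^ (m + 2) + β ^ (m + 2)) := by
    intro m
    induction m with
    | zero =>
      have e1 := hN 1
      have e2 := hN 2
      rw [show Finset.Icc 1 2 = {1, 2} by rfl] at e2
      simp [csum_zero, csum_one, csum_two] at e1 e2
      constructor
      · simp only [zero_add, pow_one]; rw [← e1]; linear_combination hab
      · simp only [zero_add]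
        rw [← e1] at e2
        linear_combination -e2 + (α + β - (1 + z)) * hab - 2 * hab'
    | succ m ih =>
      refine ⟨ih.2, ?_⟩
      have e := hN (m + 3)
      rw [csum_big z s h, mul_zero, Finset.sum_Icc_succ_top (by omega),
        Finset.sum_Icc_succ_top (by omega), Finset.sum_Icc_succ_top (by omega),
        Finset.sum_eq_zero] at e
      · rw [show m + 3 - (m + 2 + 1) = 0 by omega, show m + 3 - (m + 1 + 1) = 1 by omega,
          show m + 3 - (m + 1) = 2 by omega, csum_zero, csum_one, csum_two] at e
        rw [show m + 1 + 1 = m + 2 by ring, ih.1, ih.2] at e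
        rw [show m + 1 + 2 = m + 2 + 1 by ring]
        linear_combination -e + (α ^ (m + 2) + β ^ (m + 2)) * hab
          - (α ^ (m + 1) + β ^ (m + 1)) * hab'
      · intro k hk
        rw [Finset.mem_Icc] at hk
        rw [show m + 3 - k = (m - k) + 3 by omega, csum_big z s h, mul_zero]
  obtain ⟨m, rfl⟩ : ∃ m, n = m + 1 := ⟨n - 1, by omega⟩
  exact (key m).1

section field
variable {K : Type} [Field K] [Fintype K] [Algebra (ZMod 2) K]

lemma minpoly_deg_dvd (n : ℕ) (hK : Fintype.card K = 2 ^ n) (a : K) :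
    (minpoly (ZMod 2) a).natDegree ∣ n := by
  have hi : IsIntegral (ZMod 2) a := Algebra.IsIntegral.isIntegral a
  apply (minpoly.irreducible hi).natDegree_dvd_of_dvd_X_pow_card_pow_sub_X
  apply minpoly.dvd
  simp only [Nat.card_zmod, map_sub, map_pow, aeval_X]
  rw [← hK, FiniteField.pow_card, sub_self]

lemma minpoly_eq_iff (P : (ZMod 2)[X]) (hP : P.Monic) (hi : Irreducible P) (a : K) :
    minpoly (ZMod 2) a = P ↔ aeval a P = 0 := by
  constructor
  · rintro rfl; exact minpoly.aeval _ _
  · intro h; exact (minpoly.eq_of_irreducible_of_monic hi h hP).symm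

open Classical in
lemma card_fiber (n : ℕ) (hK : Fintype.card K = 2 ^ n) (P : (ZMod 2)[X]) (hP : P.Monic)
    (hi : Irreducible P) (hd : P.natDegree ∣ n) :
    (Finset.univ.filter (fun a : K => minpoly (ZMod 2) a = P)).card = P.natDegree := by
  have hsep : P.Separable := PerfectField.separable_of_irreducible hi
  have h1 : P ∣ X ^ (Fintype.card K) - X := by
    have := hi.natDegree_dvd_iff_dvd_X_pow_card_pow_sub_X.1 hd
    rwa [Nat.card_zmod, ← hK] at this
  have hsplit : Splits (P.map (algebraMap (ZMod 2) K)) := by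
    have hS : Splits ((X ^ (Fintype.card K) - X : (ZMod 2)[X]).map (algebraMap (ZMod 2) K)) := by
      simpa using FiniteField.splits_X_pow_card_sub_X (K := K) 2
    refine Splits.of_dvd hS ?_ (Polynomial.map_dvd _ h1)
    apply Polynomial.map_ne_zero
    apply FiniteField.X_pow_card_sub_X_ne_zero
    exact Fintype.one_lt_card
  rw [← card_rootSet_eq_natDegree hsep hsplit, ← Set.toFinset_card]
  congr 1
  ext a
  rw [Finset.mem_filter, Set.mem_toFinset, mem_rootSet_of_ne hi.ne_zero, minpoly_eq_iff P hP hi]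
  simp

lemma sum_over_field (χ : (ZMod 2)[X] → ℂ) (h1 : χ 1 = 1)
    (hmul : ∀ f g : (ZMod 2)[X], f.Monic → g.Monic → χ (f * g) = χ f * χ g)
    (n : ℕ) (hn : n ≠ 0) (hK : Fintype.card K = 2 ^ n) :
    ∑ a : K, χ (minpoly (ZMod 2) a ^ (n / (minpoly (ZMod 2) a).natDegree)) = psum χ n := by
  classical
  have hA : ∀ x ∈ n.divisorsAntidiagonal, ∀ P ∈ irrOf x.1, (x.1 : ℂ) * χ P ^ x.2 =
      ∑ a : K, if minpoly (ZMod 2) a = P then χ (minpoly (ZMod 2) a ^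
        (n / (minpoly (ZMod 2) a).natDegree)) else 0 := by
    rintro ⟨d, j⟩ hx P hP
    rw [Nat.mem_divisorsAntidiagonal] at hx
    rw [mem_irrOf] at hP
    simp only at hx hP ⊢
    have hd : 0 < d := Nat.pos_of_ne_zero (by rintro rfl; simp at hx; omega)
    rw [← Finset.sum_filter, Finset.sum_congr rfl (g := fun _ => χ P ^ j), Finset.sum_const,
      card_fiber n hK P hP.1.1 hP.2, nsmul_eq_mul, hP.1.2]
    · rw [hP.1.2]; exact ⟨j, hx.1.symm⟩
    · intro a ha
      rw [Finset.mem_filter] at ha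
      rw [ha.2, hP.1.2, ← hx.1, Nat.mul_div_cancel_left _ hd, chi_pow' χ h1 hmul P hP.1.1]
  rw [psum, Finset.sum_congr rfl fun x hx => Finset.sum_congr rfl (hA x hx)]
  rw [Finset.sum_congr rfl fun x hx => Finset.sum_comm, Finset.sum_comm]
  refine Finset.sum_congr rfl fun a _ => ?_
  have hi : IsIntegral (ZMod 2) a := Algebra.IsIntegral.isIntegral a
  set P := minpoly (ZMod 2) a with hPdef
  have hd : P.natDegree ∣ n := minpoly_deg_dvd n hK a
  rw [Finset.sum_eq_single (P.natDegree, n / P.natDegree)]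
  · rw [Finset.sum_ite_eq, if_pos]
    rw [mem_irrOf]
    exact ⟨⟨minpoly.monic hi, rfl⟩, minpoly.irreducible hi⟩
  · rintro ⟨d, j⟩ hx hne
    rw [Finset.sum_ite_eq, if_neg]
    rw [mem_irrOf]
    rintro ⟨⟨_, h⟩, _⟩
    apply hne
    rw [Nat.mem_divisorsAntidiagonal] at hx
    simp only at hx h
    subst h
    rw [← hx.1, Nat.mul_div_cancel_left]
    exact Nat.pos_of_ne_zero (by intro h; simp [h] at hx; omega)
  · intro h
    exfalso
    apply h
    rw [Nat.mem_divisorsAntidiagonal]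
    exact ⟨Nat.mul_div_cancel' hd, hn⟩

lemma minpoly_frob (a : K) (i : ℕ) : minpoly (ZMod 2) (a ^ 2 ^ i) = minpoly (ZMod 2) a := by
  induction i with
  | zero => simp
  | succ i ih =>
    rw [← ih, ← minpoly.algHom_eq (FiniteField.frobeniusAlgHom (ZMod 2) K)
      (RingHom.injective _) (a ^ 2 ^ i)]
    simp [pow_succ, pow_mul]

lemma conj_prod [CharP K 2] (n : ℕ) (hn : n ≠ 0) (hK : Fintype.card K = 2 ^ n) (a : K) :
    ∏ i ∈ Finset.range n, (X + C (a ^ 2 ^ i)) =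
      (minpoly (ZMod 2) a ^ (n / (minpoly (ZMod 2) a).natDegree)).map (algebraMap (ZMod 2) K) := by
  set Q : K[X] := ∏ i ∈ Finset.range n, (X + C (a ^ 2 ^ i)) with hQ
  have hQm : Q.Monic := monic_prod_of_monic _ _ fun i _ => monic_X_add_C _
  have hQd : Q.natDegree = n := by
    rw [hQ, natDegree_prod_of_monic _ _ fun i _ => monic_X_add_C _]
    simp only [natDegree_X_add_C, Finset.sum_const, Finset.card_range, smul_eq_mul, mul_one]
  have hfrob : Q.map (frobenius K 2) = Q := by
    rw [hQ, Polynomial.map_prod]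
    have e : ∀ i, (X + C (a ^ 2 ^ i) : K[X]).map (frobenius K 2) = X + C (a ^ 2 ^ (i + 1)) := by
      intro i
      simp [frobenius_def, pow_succ, pow_mul, mul_pow]
    simp only [e]
    obtain ⟨m, rfl⟩ := Nat.exists_eq_succ_of_ne_zero hn
    rw [Finset.prod_range_succ, Finset.prod_range_succ' (fun i => X + C (a ^ 2 ^ i))]
    rw [← Nat.succ_eq_add_one, ← hK, FiniteField.pow_card]
    simp
  have hlift : Q ∈ lifts (algebraMap (ZMod 2) K) := by
    rw [lifts_iff_coeff_lifts]
    intro i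
    have h : (Q.coeff i) ^ 2 = Q.coeff i := by
      conv_rhs => rw [← hfrob]
      rw [coeff_map, frobenius_def]
    have h2 : Q.coeff i * (Q.coeff i - 1) = 0 := by linear_combination h
    rcases mul_eq_zero.1 h2 with h3 | h3
    · exact ⟨0, by simp [h3]⟩
    · exact ⟨1, by simp [sub_eq_zero.1 h3]⟩
  obtain ⟨R, hR⟩ := (mem_lifts _).1 hlift
  have hRm : R.Monic := by
    apply monic_of_injective (algebraMap (ZMod 2) K).injective
    rw [hR]; exact hQm
  have hRd : R.natDegree = n := by rw [← hQd, ← hR, natDegree_map]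
  have hQs : Q.Splits := by
    rw [hQ]; exact Splits.prod fun i _ => Splits.X_add_C _
  have hi : IsIntegral (ZMod 2) a := Algebra.IsIntegral.isIntegral a
  set P := minpoly (ZMod 2) a with hP
  set s := UniqueFactorizationMonoid.normalizedFactors R with hs
  have hall : ∀ q ∈ s, q = P := by
    intro q hq
    have h1 := UniqueFactorizationMonoid.irreducible_of_normalized_factor q hq
    have hm : q.Monic := by
      rw [← UniqueFactorizationMonoid.normalize_normalized_factor q hq]
      exact monic_normalize h1.ne_zero
    have hdv : q.map (algebraMap (ZMod 2) K) ∣ Q := by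
      rw [← hR]
      exact Polynomial.map_dvd _ (UniqueFactorizationMonoid.dvd_of_mem_normalizedFactors hq)
    have hsp := hQs.of_dvd hQm.ne_zero hdv
    obtain ⟨b, hb⟩ := hsp.exists_eval_eq_zero (by
      rw [degree_map]; exact (degree_pos_of_irreducible h1).ne')
    have hQb : Q.eval b = 0 := eval_eq_zero_of_dvd_of_eval_eq_zero hdv hb
    rw [hQ, eval_prod, Finset.prod_eq_zero_iff] at hQb
    obtain ⟨i, _, hbi⟩ := hQb
    have hba : b = a ^ 2 ^ i := by
      simp only [eval_add, eval_X, eval_C] at hbi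
      exact CharTwo.add_eq_zero.1 hbi
    rw [hP, ← minpoly_frob a i, ← hba]
    apply minpoly.eq_of_irreducible_of_monic h1 _ hm
    rw [aeval_def, ← eval_map, hb]
  have hsr := Multiset.eq_replicate_card.2 hall
  have hprod : R = P ^ Multiset.card s := by
    rw [← Multiset.prod_replicate, ← hsr, hs,
      UniqueFactorizationMonoid.prod_normalizedFactors_eq hRm.ne_zero, hRm.normalize_eq_self]
  have hcard : n / P.natDegree = Multiset.card s := by
    rw [← hRd, hprod, (minpoly.monic hi).natDegree_pow, Nat.mul_div_cancel]
    exact minpoly.natDegree_pos hi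
  rw [hcard, ← hprod, hR]

lemma traceFn_eq [CharP K 2] (n : ℕ) (hn : n ≠ 0) (hK : Fintype.card K = 2 ^ n) (a : K) (k : ℕ)
    (hk : k ≤ n) :
    traceFn 2 n k a = algebraMap (ZMod 2) K
      ((minpoly (ZMod 2) a ^ (n / (minpoly (ZMod 2) a).natDegree)).reverse.coeff k) := by
  have h := conj_prod n hn hK a
  set R := minpoly (ZMod 2) a ^ (n / (minpoly (ZMod 2) a).natDegree)
  have hRd : R.natDegree = n := by
    rw [← natDegree_map (algebraMap (ZMod 2) K), ← h,
      natDegree_prod_of_monic _ _ fun i _ => monic_X_add_C _]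
    simp only [natDegree_X_add_C, Finset.sum_const, Finset.card_range, smul_eq_mul, mul_one]
  rw [coeff_reverse, hRd, revAt_le hk, ← coeff_map, ← h, Finset.prod_X_add_C_coeff]
  · rw [Finset.card_range, Nat.sub_sub_self hk]; rfl
  · simp

end field

lemma orth4 (m : ℕ) : (1 : ℂ) ^ m + Complex.I ^ m + (-1) ^ m + (-Complex.I) ^ m =
    if m % 4 = 0 then 4 else 0 := by
  have h2 : (-Complex.I) ^ 4 = 1 := by rw [Even.neg_pow (by decide)]; simp
  have h3 : (-1 : ℂ) ^ 4 = 1 := by norm_num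
  rw [one_pow, pow_eq_pow_mod m Complex.I_pow_four, pow_eq_pow_mod m h2, pow_eq_pow_mod m h3]
  have : m % 4 < 4 := Nat.mod_lt _ (by norm_num)
  generalize m % 4 = r at *
  interval_cases r
  · norm_num
  · norm_num
  · norm_num [Complex.I_sq]
  · rw [Odd.neg_pow (by decide : Odd 3) Complex.I]; norm_num

lemma orth2 (m : ℕ) : (1 : ℂ) ^ m + (-1) ^ m = if m % 2 = 0 then 2 else 0 := by
  have h3 : (-1 : ℂ) ^ 2 = 1 := by norm_num
  rw [one_pow, pow_eq_pow_mod m h3]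
  have : m % 2 < 2 := Nat.mod_lt _ (by norm_num)
  generalize m % 2 = r at *
  interval_cases r <;> norm_num

lemma ex_iff : ∀ x t, ((ex1 x + 3 * ex1 t) % 4 = 0 ∧ (ex2 x + ex2 t) % 2 = 0) ↔ x = t := by
  decide

/-- weight -/
noncomputable def wt (z s : ℂ) (t : ZMod 2 × ZMod 2 × ZMod 2) : ℂ :=
  z ^ (3 * ex1 t) * s ^ ex2 t

lemma orth (x t) : (if x = t then (8 : ℂ) else 0) =
    wt 1 1 t * psi 1 1 x + wt 1 (-1) t * psi 1 (-1) x +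
    wt Complex.I 1 t * psi Complex.I 1 x + wt Complex.I (-1) t * psi Complex.I (-1) x +
    wt (-1) 1 t * psi (-1) 1 x + wt (-1) (-1) t * psi (-1) (-1) x +
    wt (-Complex.I) 1 t * psi (-Complex.I) 1 x +
    wt (-Complex.I) (-1) t * psi (-Complex.I) (-1) x := by
  have h4 := orth4 (ex1 x + 3 * ex1 t)
  have h2 := orth2 (ex2 x + ex2 t)
  have h : (if x = t then (8 : ℂ) else 0) =
      (if (ex1 x + 3 * ex1 t) % 4 = 0 then 4 else 0) *
        (if (ex2 x + ex2 t) % 2 = 0 then 2 else 0) := by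
    simp only [← ex_iff x t]
    split_ifs <;> first | tauto | norm_num
  rw [h, ← h4, ← h2]
  simp only [wt, psi, pow_add]
  ring

lemma rho_d21 (n : ℕ) : rho n d21 = (-1 - Complex.I) ^ n + (-1 + Complex.I) ^ n := by
  have h : d21.map (Int.castRingHom ℂ) =
      (({-1 - Complex.I, -1 + Complex.I} : Multiset ℂ).map fun a => X - C a).prod := by
    have hI : (C Complex.I : ℂ[X]) * C Complex.I = -1 := by
      rw [← C_mul, Complex.I_mul_I]; simp
    simp [d21]
    linear_combination hI
  rw [rho, h, roots_multiset_prod_X_sub_C]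
  simp

lemma rho_d41 (n : ℕ) (w v : ℂ) (h1 : w + v = -1) (h2 : w * v = 1) :
    rho n d41 = (w ^ n + v ^ n) * ((1 + Complex.I) ^ n + (1 - Complex.I) ^ n) := by
  have h : d41.map (Int.castRingHom ℂ) =
      (({(1 + Complex.I) * w, (1 + Complex.I) * v, (1 - Complex.I) * w, (1 - Complex.I) * v} :
        Multiset ℂ).map fun a => X - C a).prod := by
    have hI : (C Complex.I : ℂ[X]) * C Complex.I = -1 := by
      rw [← C_mul, Complex.I_mul_I]; simp
    have e1 : (C w : ℂ[X]) + C v = -1 := by rw [← C_add, h1]; simp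
    have e2 : (C w : ℂ[X]) * C v = 1 := by rw [← C_mul, h2]; simp
    have f : ∀ u : ℂ[X], (X - u * C w) * (X - u * C v) = X ^ 2 + u * X + u ^ 2 := by
      intro u
      linear_combination (-u * X) * e1 + u ^ 2 * e2
    simp [d41]
    rw [← mul_assoc, f, f]
    generalize (C Complex.I : ℂ[X]) = i at hI
    have h3 : i ^ 2 = -1 := by rw [pow_two, hI]
    have h4 : i ^ 4 = 1 := by rw [show i ^ 4 = (i ^ 2) ^ 2 by ring, h3]; ring
    ring_nf
    simp only [h3, h4]
    ring
  rw [rho, h, roots_multiset_prod_X_sub_C]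
  simp [mul_pow]
  ring

lemma cnt3_eq (n : ℕ) (hn : 3 ≤ n) (hodd : Odd n)
    (K : Type) [Field K] [Fintype K] [Algebra (ZMod 2) K] [CharP K 2]
    (hK : Fintype.card K = 2 ^ n) (w v : ℂ) (h1 : w + v = -1) (h2 : w * v = 1)
    (t : ZMod 2 × ZMod 2 × ZMod 2) :
    8 * (cnt3 n K (algebraMap (ZMod 2) K t.1) (algebraMap (ZMod 2) K t.2.1)
      (algebraMap (ZMod 2) K t.2.2) : ℂ) =
    2 ^ n + (-1) ^ ex2 t * ((1 + Complex.I) ^ n + (1 - Complex.I) ^ n) +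
      Complex.I ^ (3 * ex1 t) * (1 + Complex.I) ^ n * (1 - (-1) ^ ex2 t * (w ^ n + v ^ n)) +
      (-Complex.I) ^ (3 * ex1 t) * (1 - Complex.I) ^ n * (1 - (-1) ^ ex2 t * (w ^ n + v ^ n)) := by
  classical
  have hn0 : n ≠ 0 := by omega
  set R : K → (ZMod 2)[X] := fun a =>
    minpoly (ZMod 2) a ^ (n / (minpoly (ZMod 2) a).natDegree) with hR
  have hinj := (algebraMap (ZMod 2) K).injective
  have hc : (8 : ℂ) * (cnt3 n K (algebraMap (ZMod 2) K t.1) (algebraMap (ZMod 2) K t.2.1)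
      (algebraMap (ZMod 2) K t.2.2) : ℂ) = ∑ a : K, if top3 (R a) = t then (8 : ℂ) else 0 := by
    rw [← Finset.sum_filter, Finset.sum_const, nsmul_eq_mul, mul_comm]
    congr 2
    rw [cnt3, Nat.card_eq_fintype_card, Fintype.card_subtype]
    congr 1
    ext a
    simp only [Finset.mem_filter, Finset.mem_univ, true_and]
    rw [traceFn_eq n hn0 hK a 1 (by omega), traceFn_eq n hn0 hK a 2 (by omega),
      traceFn_eq n hn0 hK a 3 (by omega), hinj.eq_iff, hinj.eq_iff, hinj.eq_iff, top3,
      Prod.ext_iff, Prod.ext_iff]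
  have hW : ∀ z s : ℂ, z ^ 4 = 1 → s ^ 2 = 1 → (1 + z + z ^ 2 + z ^ 3) * (1 + s) = 0 →
      ∀ α β : ℂ, α + β = -(1 + z) → α * β = 1 + z + z ^ 2 + z ^ 3 * s →
      ∑ a : K, psi z s (top3 (R a)) = -(α ^ n + β ^ n) := by
    intro z s hz hs h α β hab hab'
    rw [← psum_formula z s hz hs h α β hab hab' n (by omega),
      ← sum_over_field (K := K) (chi z s) (chi_one z s) (chi_mul z s hz hs) n hn0 hK]
    rfl
  have hI2 := Complex.I_sq
  have hI3 := Complex.I_pow_three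
  have hI4 := Complex.I_pow_four
  have hnI3 : (-Complex.I) ^ 3 = Complex.I := by rw [Odd.neg_pow (by decide)]; simp
  have hnI2 : (-Complex.I) ^ 2 = -1 := by rw [Even.neg_pow (by decide)]; simp
  have hnI4 : (-Complex.I) ^ 4 = 1 := by rw [Even.neg_pow (by decide)]; simp
  have W1 : ∑ a : K, psi 1 1 (top3 (R a)) = 2 ^ n := by
    simp [psi, hK]
  have W2 : ∑ a : K, psi 1 (-1) (top3 (R a)) =
      (1 + Complex.I) ^ n + (1 - Complex.I) ^ n := by
    rw [hW 1 (-1) (by norm_num) (by norm_num) (by norm_num) (-(1 + Complex.I))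
      (-(1 - Complex.I)) (by ring) (by ring_nf; rw [hI2]; norm_num),
      hodd.neg_pow, hodd.neg_pow]
    ring
  have W3 : ∑ a : K, psi Complex.I 1 (top3 (R a)) = (1 + Complex.I) ^ n := by
    rw [hW Complex.I 1 hI4 (by norm_num) (by rw [hI2, hI3]; ring) (-(1 + Complex.I)) 0 (by ring)
      (by rw [hI2, hI3]; ring), hodd.neg_pow, zero_pow hn0]
    ring
  have W4 : ∑ a : K, psi Complex.I (-1) (top3 (R a)) =
      -((1 + Complex.I) ^ n * (w ^ n + v ^ n)) := by
    rw [hW Complex.I (-1) hI4 (by norm_num) (by ring) ((1 + Complex.I) * w)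
      ((1 + Complex.I) * v) (by linear_combination (1 + Complex.I) * h1)
      (by rw [hI2, hI3]; linear_combination (1 + Complex.I) ^ 2 * h2 + hI2), mul_pow, mul_pow]
    ring
  have W5 : ∑ a : K, psi (-1) 1 (top3 (R a)) = 0 := by
    rw [hW (-1) 1 (by norm_num) (by norm_num) (by norm_num) 0 0 (by norm_num) (by norm_num),
      zero_pow hn0]
    ring
  have W6 : ∑ a : K, psi (-1) (-1) (top3 (R a)) = 0 := by
    obtain ⟨r, hr⟩ := IsAlgClosed.exists_pow_nat_eq (-2 : ℂ) (n := 2) (by norm_num)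
    rw [hW (-1) (-1) (by norm_num) (by norm_num) (by norm_num) r (-r) (by ring)
      (by linear_combination -hr), hodd.neg_pow]
    ring
  have W7 : ∑ a : K, psi (-Complex.I) 1 (top3 (R a)) = (1 - Complex.I) ^ n := by
    rw [hW (-Complex.I) 1 hnI4 (by norm_num) (by rw [hnI2, hnI3]; ring) (-(1 - Complex.I)) 0
      (by ring) (by rw [hnI2, hnI3]; ring), hodd.neg_pow, zero_pow hn0]
    ring
  have W8 : ∑ a : K, psi (-Complex.I) (-1) (top3 (R a)) =
      -((1 - Complex.I) ^ n * (w ^ n + v ^ n)) := by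
    rw [hW (-Complex.I) (-1) hnI4 (by norm_num) (by ring) ((1 - Complex.I) * w)
      ((1 - Complex.I) * v) (by linear_combination (1 - Complex.I) * h1)
      (by rw [hnI2, hnI3]; linear_combination (1 - Complex.I) ^ 2 * h2 + hI2), mul_pow, mul_pow]
    ring
  rw [hc]
  simp only [orth]
  simp only [Finset.sum_add_distrib, ← Finset.mul_sum]
  rw [W1, W2, W3, W4, W5, W6, W7, W8]
  simp only [wt, one_pow]
  ring

theorem statement11 (n : ℕ) (hn : 3 ≤ n) (hodd : Odd n)
    (K : Type) [Field K] [Fintype K] (hK : Fintype.card K = 2 ^ n) :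
    ((cnt3 n K 0 0 0 : ℂ) = 2 ^ (n - 3) - (1 / 8) * (2 * rho n d21 + rho n d41)) ∧
    ((cnt3 n K 0 1 0 : ℂ) = 2 ^ (n - 3) + (1 / 8) * rho n d41) ∧
    ((cnt3 n K 0 0 1 : ℂ) = 2 ^ (n - 3) + (1 / 8) * rho n d41) ∧
    ((cnt3 n K 0 1 1 : ℂ) = 2 ^ (n - 3) - (1 / 8) * (-2 * rho n d21 + rho n d41)) ∧
    (n % 4 = 1 →
      ((cnt3 n K 1 0 0 : ℂ) = 2 ^ (n - 3) - (1 / 8) * (2 * rho n d21 + 1 * rho n d41)) ∧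
      ((cnt3 n K 1 1 0 : ℂ) = 2 ^ (n - 3) - (1 / 8) * (-2 * rho n d21 + 1 * rho n d41)) ∧
      ((cnt3 n K 1 0 1 : ℂ) = 2 ^ (n - 3) - (1 / 8) * (0 * rho n d21 + (-1) * rho n d41)) ∧
      ((cnt3 n K 1 1 1 : ℂ) = 2 ^ (n - 3) - (1 / 8) * (0 * rho n d21 + (-1) * rho n d41))) ∧
    (n % 4 = 3 →
      ((cnt3 n K 1 0 0 : ℂ) = 2 ^ (n - 3) - (1 / 8) * (0 * rho n d21 + (-1) * rho n d41)) ∧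
      ((cnt3 n K 1 1 0 : ℂ) = 2 ^ (n - 3) - (1 / 8) * (0 * rho n d21 + (-1) * rho n d41)) ∧
      ((cnt3 n K 1 0 1 : ℂ) = 2 ^ (n - 3) - (1 / 8) * (-2 * rho n d21 + 1 * rho n d41)) ∧
      ((cnt3 n K 1 1 1 : ℂ) = 2 ^ (n - 3) - (1 / 8) * (2 * rho n d21 + 1 * rho n d41))) := by
  have hp2 : Fact (Nat.Prime 2) := ⟨Nat.prime_two⟩
  have hchar : CharP K 2 := by
    obtain ⟨p, hp⟩ := CharP.exists K
    obtain ⟨m, hpr, hm⟩ := FiniteField.card K p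
    have : p ∣ 2 ^ n := by rw [← hK, hm]; exact dvd_pow_self p m.ne_zero
    have h2 := (Nat.prime_dvd_prime_iff_eq hpr Nat.prime_two).1 (hpr.dvd_of_dvd_pow this)
    rwa [h2] at hp
  let _ : Algebra (ZMod 2) K := ZMod.algebra K 2
  obtain ⟨w, hw⟩ : ∃ w : ℂ, w ^ 2 + w + 1 = 0 := by
    obtain ⟨r, hr⟩ := IsAlgClosed.exists_pow_nat_eq (-3 : ℂ) (n := 2) (by norm_num)
    exact ⟨(-1 + r) / 2, by linear_combination hr / 4⟩
  have h1 : w + (-1 - w) = -1 := by ring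
  have h2 : w * (-1 - w) = 1 := by linear_combination -hw
  have hc := cnt3_eq n hn hodd K hK w (-1 - w) h1 h2
  rw [rho_d41 n w (-1 - w) h1 h2, rho_d21, show (-1 - Complex.I) = -(1 + Complex.I) by ring,
    show (-1 + Complex.I) = -(1 - Complex.I) by ring, hodd.neg_pow, hodd.neg_pow]
  generalize w ^ n + (-1 - w) ^ n = m at hc ⊢
  have h8 : (2 : ℂ) ^ n = 8 * 2 ^ (n - 3) := by
    conv_lhs => rw [show n = 3 + (n - 3) by omega, pow_add]
    norm_num
  rw [h8] at hc
  have v1 : (1 : ZMod 2).val = 1 := rfl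
  have hadd : (1 + 1 : ZMod 2) = 0 := rfl
  have hI2 := Complex.I_sq
  have hI3 := Complex.I_pow_three
  have hI6 : Complex.I ^ 6 = -1 := by rw [pow_eq_pow_mod 6 Complex.I_pow_four]; simp
  have hI9 : Complex.I ^ 9 = Complex.I := by rw [pow_eq_pow_mod 9 Complex.I_pow_four]; simp
  have hn3 : (-Complex.I) ^ 3 = Complex.I := by rw [Odd.neg_pow (by decide)]; simp
  have hn6 : (-Complex.I) ^ 6 = -1 := by rw [Even.neg_pow (by decide), hI6]
  have hn9 : (-Complex.I) ^ 9 = -Complex.I := by rw [Odd.neg_pow (by decide), hI9]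
  have c000 := hc (0, 0, 0)
  have c010 := hc (0, 1, 0)
  have c001 := hc (0, 0, 1)
  have c011 := hc (0, 1, 1)
  have c100 := hc (1, 0, 0)
  have c110 := hc (1, 1, 0)
  have c101 := hc (1, 0, 1)
  have c111 := hc (1, 1, 1)
  clear hc
  simp only [ex1, ex2, map_zero, map_one, ZMod.val_zero, v1, hadd, mul_zero, mul_one, zero_add,
    add_zero, pow_zero, pow_one, one_mul, zero_mul, Nat.reduceMul, Nat.reduceAdd, hI3, hI6, hI9,
    hn3, hn6, hn9] at c000 c010 c001 c011 c100 c110 c101 c111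
  have hp4 : (1 + Complex.I) ^ 4 = -4 := by
    linear_combination (Complex.I ^ 2 + 4 * Complex.I + 5) * hI2
  have hq4 : (1 - Complex.I) ^ 4 = -4 := by
    linear_combination (Complex.I ^ 2 - 4 * Complex.I + 5) * hI2
  refine ⟨?_, ?_, ?_, ?_, ?_, ?_⟩
  · linear_combination c000 / 8
  · linear_combination c010 / 8
  · linear_combination c001 / 8
  · linear_combination c011 / 8
  · intro h
    obtain ⟨k, hk⟩ : ∃ k, n = 4 * k + 1 := ⟨n / 4, by omega⟩
    have hp : (1 + Complex.I) ^ n = (-4) ^ k * (1 + Complex.I) := by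
      rw [hk, pow_succ, pow_mul, hp4]
    have hq : (1 - Complex.I) ^ n = (-4) ^ k * (1 - Complex.I) := by
      rw [hk, pow_succ, pow_mul, hq4]
    rw [hp, hq] at c100 c110 c101 c111 ⊢
    generalize (-4 : ℂ) ^ k = y at c100 c110 c101 c111 ⊢
    refine ⟨?_, ?_, ?_, ?_⟩
    · linear_combination c100 / 8 - (1 - m) * y / 4 * hI2
    · linear_combination c110 / 8 + (1 + m) * y / 4 * hI2
    · linear_combination c101 / 8 - (1 + m) * y / 4 * hI2
    · linear_combination c111 / 8 + (1 - m) * y / 4 * hI2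
  · intro h
    obtain ⟨k, hk⟩ : ∃ k, n = 4 * k + 3 := ⟨n / 4, by omega⟩
    have hp3 : (1 + Complex.I) ^ 3 = -2 + 2 * Complex.I := by
      linear_combination (Complex.I + 3) * hI2
    have hq3 : (1 - Complex.I) ^ 3 = -2 - 2 * Complex.I := by
      linear_combination (-Complex.I + 3) * hI2
    have hp : (1 + Complex.I) ^ n = (-4) ^ k * (-2 + 2 * Complex.I) := by
      rw [hk, pow_add, pow_mul, hp4, hp3]
    have hq : (1 - Complex.I) ^ n = (-4) ^ k * (-2 - 2 * Complex.I) := by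
      rw [hk, pow_add, pow_mul, hq4, hq3]
    rw [hp, hq] at c100 c110 c101 c111 ⊢
    generalize (-4 : ℂ) ^ k = y at c100 c110 c101 c111 ⊢
    refine ⟨?_, ?_, ?_, ?_⟩
    · linear_combination c100 / 8 - (1 - m) * y / 2 * hI2
    · linear_combination c110 / 8 + (1 + m) * y / 2 * hI2
    · linear_combination c101 / 8 - (1 + m) * y / 2 * hI2
    · linear_combination c111 / 8 + (1 - m) * y / 2 * hI2
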